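/- Define cov : ℝ⁶ → ℝ by cov(x₁, …, x₆) = 2 G((x₁+x₄)/2, (x₂+x₅)/2, (x₃+x₆)/2). Then cov is a C¹-smooth convex function, and for each m ∈ {1, …, 6}, ∂cov/∂x_m = α_m, where α_{m+3} = α_m for m = 1, 2, 3 and (α₁, α₂, α₃) are the inner angles of the generalized Euclidean triangle of edge lengths e^{(x₁+x₄)/2}, e^{(x₂+x₅)/2}, e^{(x₃+x₆)/2}, with α_m opposite the edge of length e^{(x_m+x_{m+3})/2}. -/

import Mathlib

/-- The Lobachevsky function `Λ(t) = -∫₀ᵗ log |2 sin s| ds`. -/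
noncomputable def Lob (t : ℝ) : ℝ := -∫ s in (0 : ℝ)..t, Real.log |2 * Real.sin s|

/-- The inner angle, opposite the edge of length `x i`, of the generalized Euclidean
triangle of edge lengths `x 0, x 1, x 2` (clamped arccos convention). -/
noncomputable def ang (i : Fin 3) (x : Fin 3 → ℝ) : ℝ :=
  Real.arccos (((x (i + 1)) ^ 2 + (x (i + 2)) ^ 2 - (x i) ^ 2) / (2 * x (i + 1) * x (i + 2)))

/-- `G(y) = Σᵢ (Λ(aᵢ) + aᵢ yᵢ)`, where `aᵢ` are the inner angles of the generalized
Euclidean triangle of edge lengths `e^{y₁}, e^{y₂}, e^{y₃}`. -/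
noncomputable def Gfn (y : Fin 3 → ℝ) : ℝ :=
  ∑ i : Fin 3,
    (Lob (ang i (fun m => Real.exp (y m))) + ang i (fun m => Real.exp (y m)) * y i)

/-- `cov(x₁,…,x₆) = 2 G((x₁+x₄)/2, (x₂+x₅)/2, (x₃+x₆)/2)` (coordinates indexed by
`Fin 6`, with coordinates `m` and `m+3` corresponding to opposite edges). -/
noncomputable def covFn (x : Fin 6 → ℝ) : ℝ :=
  2 * Gfn (fun m : Fin 3 =>
    (x ⟨m.val, by have := m.isLt; omega⟩ + x ⟨m.val + 3, by have := m.isLt; omega⟩) / 2)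


theorem gen_aux {E : Type*} [NormedAddCommGroup E] [NormedSpace ℝ E] (f : E → ℝ)
    (L : E → E →L[ℝ] ℝ) (hL : Continuous L) (h : ∀ y z, f y + L y (z - y) ≤ f z) :
    (∀ y, HasFDerivAt f (L y) y) ∧ ContDiff ℝ 1 f ∧ ConvexOn ℝ Set.univ f := by
  have h1 : ∀ y, HasFDerivAt f (L y) y := by
    intro y
    rw [hasFDerivAt_iff_isLittleO, Asymptotics.isLittleO_iff]
    intro c hc
    have h2 := Metric.tendsto_nhds.1 (hL.tendsto y) c hc
    filter_upwards [h2] with z hz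
    rw [dist_eq_norm] at hz
    have h3 := h y z
    have h4 := h z y
    have h5 : ‖(L z - L y) (z - y)‖ ≤ c * ‖z - y‖ :=
      ((L z - L y).le_opNorm _).trans (by gcongr)
    rw [Real.norm_eq_abs] at h5
    have h6 := le_of_abs_le h5
    have h7 : L z (y - z) = - L z (z - y) := by rw [← map_neg, neg_sub]
    rw [sub_apply] at h6
    rw [Real.norm_eq_abs, abs_le]
    constructor
    · have := norm_nonneg (z - y)
      nlinarith
    · linarith
  refine ⟨h1, ?_, convex_univ, ?_⟩
  · rw [contDiff_one_iff_fderiv]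
    refine ⟨fun y => (h1 y).differentiableAt, ?_⟩
    have : fderiv ℝ f = L := funext fun y => (h1 y).fderiv
    rwa [this]
  · intro x _ y _ a b ha hb hab
    have hx := h (a • x + b • y) x
    have hy := h (a • x + b • y) y
    set w := a • x + b • y with hw
    have h0 : a * L w (x - w) + b * L w (y - w) = 0 := by
      have : a • (x - w) + b • (y - w) = 0 := by
        have : a • (x - w) + b • (y - w) = a • x + b • y - (a + b) • w := by module
        rw [this, hab, one_smul, hw, sub_self]
      have := congrArg (L w) this
      simpa using this
    simp only [smul_eq_mul]
    have : f w = a * f w + b * f w := by rw [← add_mul, hab, one_mul]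
    nlinarith

theorem Lob_integrable (a b : ℝ) :
    IntervalIntegrable (fun s => Real.log |2 * Real.sin s|) MeasureTheory.volume a b := by
  have := MeromorphicOn.intervalIntegrable_log_norm (f := fun s : ℝ => 2 * Real.sin s) (a := a) (b := b)
    (fun x _ => by
      have : AnalyticAt ℝ (fun s : ℝ => 2 * Real.sin s) x := by fun_prop
      exact this.meromorphicAt)
  simpa [Real.norm_eq_abs] using this

theorem Lob_continuous : Continuous Lob := by
  unfold Lob
  exact (intervalIntegral.continuous_primitive Lob_integrable 0).neg

theorem Lob_hasDerivAt (t : ℝ) (h0 : 0 < t) (h1 : t < Real.pi) :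
    HasDerivAt Lob (-Real.log (2 * Real.sin t)) t := by
  have hs := Real.sin_pos_of_pos_of_lt_pi h0 h1
  have hc : ∀ s ∈ Set.Ioo 0 Real.pi, ContinuousAt (fun s => Real.log |2 * Real.sin s|) s := by
    intro s hs
    have := Real.sin_pos_of_pos_of_lt_pi hs.1 hs.2
    have h2 : |2 * Real.sin s| ≠ 0 := by positivity
    fun_prop (disch := assumption)
  have := (intervalIntegral.integral_hasDerivAt_right (Lob_integrable 0 t)
    (ContinuousAt.stronglyMeasurableAtFilter isOpen_Ioo hc t ⟨h0, h1⟩) (hc t ⟨h0, h1⟩)).neg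
  rw [abs_of_pos (by positivity)] at this
  exact this

theorem K0_term (a b t : ℝ) (ha : a ∈ Set.Icc 0 Real.pi) (hb : b ∈ Set.Icc 0 Real.pi)
    (ht : t ∈ Set.Ioo (0:ℝ) 1) :
    HasDerivAt (fun t => Lob (a + t * (b - a))) 
      (-Real.log (2 * Real.sin (a + t * (b - a))) * (b - a)) t := by
  obtain ⟨a0, a1⟩ := ha
  obtain ⟨b0, b1⟩ := hb
  obtain ⟨t0, t1⟩ := ht
  by_cases hab : a = b
  · subst hab
    simpa using hasDerivAt_const t (Lob a)
  · have hd : HasDerivAt (fun t => a + t * (b - a)) (b - a) t := by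
      simpa using ((hasDerivAt_id t).mul_const (b - a)).const_add a
    refine (Lob_hasDerivAt _ ?_ ?_).comp t hd
    · rcases lt_or_gt_of_ne hab with h | h <;> nlinarith
    · rcases lt_or_gt_of_ne hab with h | h <;> nlinarith

theorem K0 (a b z : Fin 3 → ℝ) (ha : ∀ i, a i ∈ Set.Icc 0 Real.pi)
    (hb : ∀ i, b i ∈ Set.Icc 0 Real.pi)
    (h : ∀ t ∈ Set.Ioo (0:ℝ) 1,
      ∑ i, (b i - a i) * (z i - Real.log (2 * Real.sin (a i + t * (b i - a i)))) ≤ 0) :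
    ∑ i, (Lob (b i) + b i * z i) ≤ ∑ i, (Lob (a i) + a i * z i) := by
  have hd : ∀ t ∈ Set.Ioo (0:ℝ) 1, HasDerivAt
      (fun t => ∑ i, (Lob (a i + t * (b i - a i)) + (a i + t * (b i - a i)) * z i))
      (∑ i, (b i - a i) * (z i - Real.log (2 * Real.sin (a i + t * (b i - a i))))) t := by
    intro t ht
    apply HasDerivAt.fun_sum
    intro i _
    have h2 : HasDerivAt (fun t => (a i + t * (b i - a i)) * z i) ((b i - a i) * z i) t := by
      simpa using (((hasDerivAt_id t).mul_const (b i - a i)).const_add (a i)).mul_const (z i)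
    refine ((K0_term (a i) (b i) t (ha i) (hb i) ht).fun_add h2).congr_deriv ?_
    ring
  have hanti : AntitoneOn
      (fun t => ∑ i, (Lob (a i + t * (b i - a i)) + (a i + t * (b i - a i)) * z i))
      (Set.Icc (0:ℝ) 1) := by
    apply antitoneOn_of_deriv_nonpos (convex_Icc 0 1)
    · apply Continuous.continuousOn
      have := Lob_continuous
      fun_prop
    · rw [interior_Icc]
      exact fun t ht => (hd t ht).differentiableAt.differentiableWithinAt
    · rw [interior_Icc]
      intro t ht
      rw [(hd t ht).deriv]
      exact h t ht
  have := hanti (Set.left_mem_Icc.2 zero_le_one) (Set.right_mem_Icc.2 zero_le_one) zero_le_one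
  simpa using this

theorem cot_aux (a b c u v w : ℝ) (ha : 0 < a) (hb : 0 < b) (hc : 0 < c)
    (hs : a + b + c = Real.pi) (h : u + v + w = 0) :
    0 ≤ u ^ 2 * (Real.cos a / Real.sin a) + v ^ 2 * (Real.cos b / Real.sin b)
      + w ^ 2 * (Real.cos c / Real.sin c) := by
  have sa := Real.sin_pos_of_pos_of_lt_pi ha (by linarith)
  have sb := Real.sin_pos_of_pos_of_lt_pi hb (by linarith)
  have sc := Real.sin_pos_of_pos_of_lt_pi hc (by linarith)
  have e1 : Real.cos c = Real.sin a * Real.sin b - Real.cos a * Real.cos b := by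
    rw [show c = Real.pi - (a + b) by linarith, Real.cos_pi_sub, Real.cos_add]; ring
  have e2 : Real.sin c = Real.sin a * Real.cos b + Real.cos a * Real.sin b := by
    rw [show c = Real.pi - (a + b) by linarith, Real.sin_pi_sub, Real.sin_add]
  set p := Real.cos a / Real.sin a with hp
  set q := Real.cos b / Real.sin b with hq
  set r := Real.cos c / Real.sin c with hr
  have pq : 0 < p + q := by
    have : p + q = Real.sin c / (Real.sin a * Real.sin b) := by
      rw [hp, hq, e2]; field_simp; ring
    rw [this]; positivity
  have hpq : p * q + (p + q) * r = 1 := by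
    have h1 : p + q = Real.sin c / (Real.sin a * Real.sin b) := by
      rw [hp, hq, e2]; field_simp; ring
    rw [h1, hp, hq, hr]
    field_simp
    rw [e1]; ring
  have hw : w = -(u + v) := by linarith
  have key : (p + q) * (u ^ 2 * p + v ^ 2 * q + w ^ 2 * r) = (u * p - v * q) ^ 2 + w ^ 2 := by
    have : (p + q) * (u ^ 2 * p + v ^ 2 * q + w ^ 2 * r)
      = (p + q) * (u ^ 2 * p + v ^ 2 * q) + w ^ 2 * (1 - p * q) := by
      rw [← hpq]; ring
    rw [this, hw]; ring
  by_contra hneg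
  push Not at hneg
  nlinarith [sq_nonneg (u * p - v * q), sq_nonneg w]

theorem K1 (a b z : Fin 3 → ℝ) (k : ℝ) (ha : ∀ i, a i ∈ Set.Ioo 0 Real.pi)
    (hb : ∀ i, b i ∈ Set.Icc 0 Real.pi) (sa : ∑ i, a i = Real.pi) (sb : ∑ i, b i = Real.pi)
    (hz : ∀ i, z i = k + Real.log (2 * Real.sin (a i))) :
    ∑ i, (Lob (b i) + b i * z i) ≤ ∑ i, (Lob (a i) + a i * z i) := by
  apply K0 a b z (fun i => Set.Ioo_subset_Icc_self (ha i)) hb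
  have hpos : ∀ t ∈ Set.Ico (0:ℝ) 1, ∀ i, a i + t * (b i - a i) ∈ Set.Ioo 0 Real.pi := by
    rintro t ⟨t0, t1⟩ i
    obtain ⟨x, y⟩ := ha i
    obtain ⟨x', y'⟩ := hb i
    constructor <;> nlinarith
  have hd : ∀ t ∈ Set.Ico (0:ℝ) 1, HasDerivAt
      (fun t => ∑ i, (b i - a i) * (z i - Real.log (2 * Real.sin (a i + t * (b i - a i)))))
      (∑ i, -((b i - a i) ^ 2 * (Real.cos (a i + t * (b i - a i)) / Real.sin (a i + t * (b i - a i))))) t := by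
    intro t ht
    apply HasDerivAt.fun_sum
    intro i _
    have hs := Real.sin_pos_of_pos_of_lt_pi (hpos t ht i).1 (hpos t ht i).2
    have hd : HasDerivAt (fun t => a i + t * (b i - a i)) (b i - a i) t := by
      simpa using ((hasDerivAt_id t).mul_const (b i - a i)).const_add (a i)
    have := (((hd.sin.const_mul 2).log (by positivity)).const_sub (z i)).const_mul (b i - a i)
    refine this.congr_deriv ?_
    field_simp
  have hanti : AntitoneOn
      (fun t => ∑ i, (b i - a i) * (z i - Real.log (2 * Real.sin (a i + t * (b i - a i)))))
      (Set.Ico (0:ℝ) 1) := by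
    apply antitoneOn_of_deriv_nonpos (convex_Ico 0 1)
    · exact fun t ht => (hd t ht).continuousAt.continuousWithinAt
    · rw [interior_Ico]
      exact fun t ht => (hd t (Set.Ioo_subset_Ico_self ht)).differentiableAt.differentiableWithinAt
    · rw [interior_Ico]
      intro t ht
      have ht' := Set.Ioo_subset_Ico_self ht
      rw [(hd t ht').deriv]
      have hp := hpos t ht'
      rw [Fin.sum_univ_three] at *
      have := cot_aux _ _ _ (b 0 - a 0) (b 1 - a 1) (b 2 - a 2) (hp 0).1 (hp 1).1 (hp 2).1
        (by linear_combination sa + t * (sb - sa)) (by linarith)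
      linarith
  intro t ht
  have := hanti (Set.left_mem_Ico.2 one_pos) (Set.Ioo_subset_Ico_self ht) ht.1.le
  refine this.trans ?_
  simp only [hz, zero_mul, add_zero, add_sub_cancel_right]
  rw [← Finset.sum_mul, Finset.sum_sub_distrib, sa, sb]
  simp

theorem K2_term (b S t u : ℝ) (hb : 0 ≤ b) (hbS : b ≤ S) (hS : S ≤ Real.pi) (hu : 0 < u)
    (ht : t ∈ Set.Ioo (0:ℝ) 1) :
    b * (Real.log u + Real.log (2 * Real.sin (t * S)) - Real.log (2 * Real.sin (t * b)))
      ≤ u * S - b := by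
  obtain ⟨t0, t1⟩ := ht
  rcases hb.eq_or_lt with rfl | hb
  · simp; positivity
  have hS0 : 0 < S := by linarith
  have s1 : 0 < Real.sin (t * S) := Real.sin_pos_of_pos_of_lt_pi (by positivity) (by nlinarith)
  have s2 : 0 < Real.sin (t * b) := Real.sin_pos_of_pos_of_lt_pi (by positivity) (by nlinarith)
  have hc : b * Real.sin (t * S) ≤ S * Real.sin (t * b) := by
    have := strictConcaveOn_sin_Icc.concaveOn.2 (Set.left_mem_Icc.2 Real.pi_pos.le)
      (show t * S ∈ Set.Icc 0 Real.pi from ⟨by positivity, by nlinarith⟩)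
      (show 0 ≤ 1 - b / S by rw [sub_nonneg, div_le_one hS0]; exact hbS)
      (show 0 ≤ b / S by positivity) (by ring)
    simp only [smul_eq_mul, mul_zero, Real.sin_zero, zero_add] at this
    rw [show b / S * (t * S) = t * b by field_simp] at this
    rw [div_mul_eq_mul_div, div_le_iff₀ hS0] at this
    linarith
  have hl : Real.log u + Real.log (2 * Real.sin (t * S)) - Real.log (2 * Real.sin (t * b))
      = Real.log (u * (2 * Real.sin (t * S)) / (2 * Real.sin (t * b))) := by
    rw [Real.log_div (by positivity) (by positivity), Real.log_mul hu.ne' (by positivity)]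
  rw [hl]
  have h1 := Real.log_le_sub_one_of_pos
    (show 0 < u * (2 * Real.sin (t * S)) / (2 * Real.sin (t * b)) by positivity)
  have h2 : b * (u * (2 * Real.sin (t * S)) / (2 * Real.sin (t * b))) ≤ u * S := by
    rw [← mul_div_assoc, div_le_iff₀ (by positivity)]
    nlinarith [mul_le_mul_of_nonneg_left hc hu.le]
  nlinarith [mul_le_mul_of_nonneg_left h1 hb.le]

theorem K2 (b z : Fin 3 → ℝ) (a : Fin 3 → ℝ) (i : Fin 3)
    (hb : ∀ i, 0 ≤ b i) (sb : ∑ i, b i = Real.pi)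
    (h0 : a i = Real.pi) (h1 : a (i + 1) = 0) (h2 : a (i + 2) = 0)
    (hz : Real.exp (z (i + 1)) + Real.exp (z (i + 2)) ≤ Real.exp (z i)) :
    ∑ i, (Lob (b i) + b i * z i) ≤ ∑ i, (Lob (a i) + a i * z i) := by
  have hsum : ∀ f : Fin 3 → ℝ, ∑ j, f j = f i + f (i + 1) + f (i + 2) := by
    intro f
    rw [Fin.sum_univ_three]
    fin_cases i <;> simp <;> ring
  have hcase : ∀ P : Fin 3 → Prop, P i → P (i + 1) → P (i + 2) → ∀ j, P j := by
    intro P p q r j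
    have : j = i ∨ j = i + 1 ∨ j = i + 2 := by clear * -; revert i j; decide
    rcases this with rfl | rfl | rfl <;> assumption
  have hpi := Real.pi_pos
  have sb' := hsum b
  rw [sb] at sb'
  have b0 := hb i
  have b1 := hb (i + 1)
  have b2 := hb (i + 2)
  apply K0 a b z
  · apply hcase <;> simp [h0, h1, h2, hpi.le]
  · apply hcase <;> constructor <;> linarith
  intro t ht
  rw [hsum, h0, h1, h2]
  have k1 := K2_term (b (i + 1)) (b (i + 1) + b (i + 2)) t (Real.exp (z (i + 1) - z i)) b1
    (by linarith) (by linarith) (Real.exp_pos _) ht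
  have k2 := K2_term (b (i + 2)) (b (i + 1) + b (i + 2)) t (Real.exp (z (i + 2) - z i)) b2
    (by linarith) (by linarith) (Real.exp_pos _) ht
  have hu : Real.exp (z (i + 1) - z i) + Real.exp (z (i + 2) - z i) ≤ 1 := by
    rw [Real.exp_sub, Real.exp_sub, ← add_div, div_le_one (Real.exp_pos _)]
    exact hz
  rw [Real.log_exp] at k1 k2
  have e : Real.sin (Real.pi + t * (b i - Real.pi)) = Real.sin (t * (b (i + 1) + b (i + 2))) := by
    rw [← Real.sin_pi_sub]
    congr 1
    rw [sb']; ring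
  rw [e]
  have e0 : b i - Real.pi = -(b (i + 1) + b (i + 2)) := by linarith
  rw [e0]
  simp only [sub_zero, zero_add]
  nlinarith [mul_le_mul_of_nonneg_right hu (add_nonneg b1 b2)]

theorem sin_ang_aux (x y z : ℝ) (hx : 0 < x) (hy : 0 < y) (hz : 0 < z) :
    Real.sin (Real.arccos ((y ^ 2 + z ^ 2 - x ^ 2) / (2 * y * z)))
      = x * (√((x + y + z) * (x + y - z) * (x - y + z) * (-x + y + z)) / (2 * x * y * z)) := by
  rw [Real.sin_arccos]
  have : 1 - ((y ^ 2 + z ^ 2 - x ^ 2) / (2 * y * z)) ^ 2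
      = ((x + y + z) * (x + y - z) * (x - y + z) * (-x + y + z)) / (2 * y * z) ^ 2 := by
    field_simp; ring
  rw [this, Real.sqrt_div' _ (by positivity), Real.sqrt_sq (by positivity)]
  field_simp

theorem cos_ang_lt (x y z : ℝ) (hx : 0 < x) (hy : 0 < y) (hz : 0 < z)
    (h1 : x < y + z) (h2 : y < z + x) (h3 : z < x + y) :
    -1 < (y ^ 2 + z ^ 2 - x ^ 2) / (2 * y * z) ∧ (y ^ 2 + z ^ 2 - x ^ 2) / (2 * y * z) < 1 := by
  rw [lt_div_iff₀ (by positivity), div_lt_one (by positivity)]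
  constructor <;> nlinarith

theorem ang_sum_aux (x y z : ℝ) (hx : 0 < x) (hy : 0 < y) (hz : 0 < z)
    (h1 : x < y + z) (h2 : y < z + x) (h3 : z < x + y) :
    Real.arccos ((y ^ 2 + z ^ 2 - x ^ 2) / (2 * y * z))
      + Real.arccos ((z ^ 2 + x ^ 2 - y ^ 2) / (2 * z * x))
      + Real.arccos ((x ^ 2 + y ^ 2 - z ^ 2) / (2 * x * y)) = Real.pi := by
  have cA := cos_ang_lt x y z hx hy hz h1 h2 h3
  have cB := cos_ang_lt y z x hy hz hx h2 h3 h1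
  have sA := sin_ang_aux x y z hx hy hz
  have sB := sin_ang_aux y z x hy hz hx
  have hD : (y + z + x) * (y + z - x) * (y - z + x) * (-y + z + x)
    = (x + y + z) * (x + y - z) * (x - y + z) * (-x + y + z) := by ring
  rw [hD] at sB
  have hle : Real.arccos ((y ^ 2 + z ^ 2 - x ^ 2) / (2 * y * z))
      + Real.arccos ((z ^ 2 + x ^ 2 - y ^ 2) / (2 * z * x)) ≤ Real.pi := by
    have : Real.arccos ((y ^ 2 + z ^ 2 - x ^ 2) / (2 * y * z))
      ≤ Real.arccos (-((z ^ 2 + x ^ 2 - y ^ 2) / (2 * z * x))) := by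
      apply Real.antitone_arccos
      have : (y ^ 2 + z ^ 2 - x ^ 2) / (2 * y * z) + (z ^ 2 + x ^ 2 - y ^ 2) / (2 * z * x)
        = (x + y) * ((z + x - y) * (y + z - x)) / (2 * x * y * z) := by field_simp; ring
      have h0 : 0 ≤ (x + y) * ((z + x - y) * (y + z - x)) / (2 * x * y * z) := by
        have := mul_pos (sub_pos.2 h2) (sub_pos.2 h1)
        positivity
      linarith
    rw [Real.arccos_neg] at this
    linarith
  have hc : Real.cos (Real.pi - (Real.arccos ((y ^ 2 + z ^ 2 - x ^ 2) / (2 * y * z))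
      + Real.arccos ((z ^ 2 + x ^ 2 - y ^ 2) / (2 * z * x))))
      = (x ^ 2 + y ^ 2 - z ^ 2) / (2 * x * y) := by
    rw [Real.cos_pi_sub, Real.cos_add, sA, sB, Real.cos_arccos cA.1.le cA.2.le,
      Real.cos_arccos cB.1.le cB.2.le]
    have hsq : √((x + y + z) * (x + y - z) * (x - y + z) * (-x + y + z)) ^ 2
      = (x + y + z) * (x + y - z) * (x - y + z) * (-x + y + z) := by
      apply Real.sq_sqrt
      have e1 : 0 < x + y - z := by linarith
      have e2 : 0 < x - y + z := by linarith
      have e3 : 0 < -x + y + z := by linarith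
      positivity
    set R := √((x + y + z) * (x + y - z) * (x - y + z) * (-x + y + z))
    field_simp
    rw [hsq]
    ring
  have := Real.arccos_cos (sub_nonneg.2 hle)
    (by linarith [Real.arccos_nonneg ((y ^ 2 + z ^ 2 - x ^ 2) / (2 * y * z)),
      Real.arccos_nonneg ((z ^ 2 + x ^ 2 - y ^ 2) / (2 * z * x))])
  rw [hc] at this
  linarith

theorem ang_degen (y : Fin 3 → ℝ) (hy : ∀ i, 0 < y i) (i : Fin 3)
    (h : y (i + 1) + y (i + 2) ≤ y i) :
    ang i y = Real.pi ∧ ang (i + 1) y = 0 ∧ ang (i + 2) y = 0 := by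
  have e1 : i + 1 + 1 = i + 2 := by clear * -; revert i; decide
  have e2 : i + 1 + 2 = i := by clear * -; revert i; decide
  have e3 : i + 2 + 1 = i := by clear * -; revert i; decide
  have e4 : i + 2 + 2 = i + 1 := by clear * -; revert i; decide
  unfold ang
  rw [e1, e2, e3, e4]
  have p0 := hy i
  have p1 := hy (i + 1)
  have p2 := hy (i + 2)
  refine ⟨Real.arccos_of_le_neg_one ?_, Real.arccos_of_one_le ?_, Real.arccos_of_one_le ?_⟩
  · rw [div_le_iff₀ (by positivity)]; nlinarith
  · rw [le_div_iff₀ (by positivity)]; nlinarith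
  · rw [le_div_iff₀ (by positivity)]; nlinarith

theorem ang_cases (z : Fin 3 → ℝ) :
    (∃ i, Real.exp (z (i + 1)) + Real.exp (z (i + 2)) ≤ Real.exp (z i)) ∨
    ((∀ i, ang i (fun m => Real.exp (z m)) ∈ Set.Ioo 0 Real.pi) ∧
      ∑ i, ang i (fun m => Real.exp (z m)) = Real.pi ∧
      ∃ k, ∀ i, z i = k + Real.log (2 * Real.sin (ang i (fun m => Real.exp (z m))))) := by
  by_cases hex : ∃ i, Real.exp (z (i + 1)) + Real.exp (z (i + 2)) ≤ Real.exp (z i)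
  · exact Or.inl hex
  right
  push Not at hex
  have h0 := hex 0
  have h1 := hex 1
  have h2 := hex 2
  have p0 := Real.exp_pos (z 0)
  have p1 := Real.exp_pos (z 1)
  have p2 := Real.exp_pos (z 2)
  have r1 : (1 : Fin 3) + 1 = 2 := rfl
  have r2 : (1 : Fin 3) + 2 = 0 := rfl
  have r3 : (2 : Fin 3) + 1 = 0 := rfl
  have r4 : (2 : Fin 3) + 2 = 1 := rfl
  simp only [zero_add, r1, r2, r3, r4] at h0 h1 h2
  have mem : ∀ w : ℝ, -1 < w ∧ w < 1 → Real.arccos w ∈ Set.Ioo 0 Real.pi := fun w hw =>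
    ⟨Real.arccos_pos.2 hw.2, lt_of_le_of_ne (Real.arccos_le_pi w) fun h =>
      absurd (Real.arccos_eq_pi.1 h) (not_le.2 hw.1)⟩
  have lg : ∀ w K : ℝ, 0 < K → w = -Real.log (2 * K) + Real.log (2 * (Real.exp w * K)) := by
    intro w K hK
    rw [show 2 * (Real.exp w * K) = Real.exp w * (2 * K) by ring,
      Real.log_mul (Real.exp_pos w).ne' (by positivity), Real.log_exp]
    ring
  refine ⟨?_, ?_, ?_⟩
  · intro i
    unfold ang
    apply mem
    fin_cases i
    · exact cos_ang_lt _ _ _ p0 p1 p2 h0 h1 h2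
    · exact cos_ang_lt _ _ _ p1 p2 p0 h1 h2 h0
    · exact cos_ang_lt _ _ _ p2 p0 p1 h2 h0 h1
  · rw [Fin.sum_univ_three]
    exact ang_sum_aux _ _ _ p0 p1 p2 h0 h1 h2
  · set x := Real.exp (z 0) with hx
    set y := Real.exp (z 1) with hy
    set w := Real.exp (z 2) with hw
    have e1 : 0 < x + y - w := by linarith
    have e2 : 0 < x - y + w := by linarith
    have e3 : 0 < -x + y + w := by linarith
    have hK : 0 < √((x + y + w) * (x + y - w) * (x - y + w) * (-x + y + w)) / (2 * x * y * w) := by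
      positivity
    refine ⟨-Real.log (2 * (√((x + y + w) * (x + y - w) * (x - y + w) * (-x + y + w))
      / (2 * x * y * w))), ?_⟩
    intro i
    fin_cases i
    · have := sin_ang_aux x y w p0 p1 p2
      have t : Real.sin (ang 0 (fun m => Real.exp (z m))) = _ := this
      exact (lg (z 0) _ hK).trans (by rw [← hx, ← t]; rfl)
    · have := sin_ang_aux y w x p1 p2 p0
      have t : Real.sin (ang 1 (fun m => Real.exp (z m))) = _ := this
      rw [show (y + w + x) * (y + w - x) * (y - w + x) * (-y + w + x)
        = (x + y + w) * (x + y - w) * (x - y + w) * (-x + y + w) by ring,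
        show 2 * y * w * x = 2 * x * y * w by ring] at t
      exact (lg (z 1) _ hK).trans (by rw [← hy, ← t]; rfl)
    · have := sin_ang_aux w x y p2 p0 p1
      have t : Real.sin (ang 2 (fun m => Real.exp (z m))) = _ := this
      rw [show (w + x + y) * (w + x - y) * (w - x + y) * (-w + x + y)
        = (x + y + w) * (x + y - w) * (x - y + w) * (-x + y + w) by ring,
        show 2 * w * x * y = 2 * x * y * w by ring] at t
      exact (lg (z 2) _ hK).trans (by rw [← hw, ← t]; rfl)

theorem ang_mem (i : Fin 3) (y : Fin 3 → ℝ) : ang i y ∈ Set.Icc 0 Real.pi :=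
  ⟨Real.arccos_nonneg _, Real.arccos_le_pi _⟩

theorem ang_sum (z : Fin 3 → ℝ) : ∑ i, ang i (fun m => Real.exp (z m)) = Real.pi := by
  rcases ang_cases z with ⟨i, h⟩ | h
  · obtain ⟨a, b, c⟩ := ang_degen (fun m => Real.exp (z m)) (fun m => Real.exp_pos _) i h
    have hsum : ∀ f : Fin 3 → ℝ, ∑ j, f j = f i + f (i + 1) + f (i + 2) := by
      intro f
      rw [Fin.sum_univ_three]
      fin_cases i <;> simp <;> ring
    rw [hsum, a, b, c]; ring
  · exact h.2.1

theorem G_sub (y z : Fin 3 → ℝ) :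
    Gfn y + ∑ i, ang i (fun m => Real.exp (y m)) * (z i - y i) ≤ Gfn z := by
  have key : ∑ i, (Lob (ang i (fun m => Real.exp (y m))) + ang i (fun m => Real.exp (y m)) * z i)
      ≤ Gfn z := by
    unfold Gfn
    rcases ang_cases z with ⟨i, h⟩ | ⟨h1, h2, k, h3⟩
    · obtain ⟨a, b, c⟩ := ang_degen (fun m => Real.exp (z m)) (fun m => Real.exp_pos _) i h
      exact K2 (fun i => ang i (fun m => Real.exp (y m))) z
        (fun i => ang i (fun m => Real.exp (z m))) i (fun i => (ang_mem i _).1) (ang_sum y) a b c h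
    · exact K1 (fun i => ang i (fun m => Real.exp (z m))) (fun i => ang i (fun m => Real.exp (y m)))
        z k h1 (fun i => ang_mem i _) h2 (ang_sum y) h3
  refine le_trans (le_of_eq ?_) key
  unfold Gfn
  rw [← Finset.sum_add_distrib]
  exact Finset.sum_congr rfl fun i _ => by ring

theorem ang_continuous (i : Fin 3) : Continuous (fun y : Fin 3 → ℝ => ang i (fun m => Real.exp (y m))) := by
  unfold ang
  refine Real.continuous_arccos.comp (Continuous.div (by fun_prop) (by fun_prop) ?_)
  intro y
  positivity

theorem cov_sub (x w : Fin 6 → ℝ) :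
    covFn x + ∑ m : Fin 6, ang ⟨m.val % 3, Nat.mod_lt _ (by norm_num)⟩
          (fun i : Fin 3 => Real.exp
            ((x ⟨i.val, by have := i.isLt; omega⟩ + x ⟨i.val + 3, by have := i.isLt; omega⟩) / 2))
        * (w m - x m) ≤ covFn w := by
  have := G_sub (fun m : Fin 3 =>
    (x ⟨m.val, by have := m.isLt; omega⟩ + x ⟨m.val + 3, by have := m.isLt; omega⟩) / 2)
    (fun m : Fin 3 =>
    (w ⟨m.val, by have := m.isLt; omega⟩ + w ⟨m.val + 3, by have := m.isLt; omega⟩) / 2)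
  unfold covFn
  refine le_trans (le_of_eq ?_) (mul_le_mul_of_nonneg_left this (by norm_num : (0:ℝ) ≤ 2))
  rw [mul_add]
  congr 1
  rw [Fin.sum_univ_six, Fin.sum_univ_three]
  generalize hA : (fun i => ang i (fun i : Fin 3 => Real.exp
            ((x ⟨i.val, by have := i.isLt; omega⟩ + x ⟨i.val + 3, by have := i.isLt; omega⟩) / 2))) = A
  have hA' := fun i => congrFun hA i
  simp only [hA']
  change A 0 * (w 0 - x 0) + A 1 * (w 1 - x 1) + A 2 * (w 2 - x 2) + A 0 * (w 3 - x 3)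
    + A 1 * (w 4 - x 4) + A 2 * (w 5 - x 5) = 2 * (A 0 * ((w 0 + w 3) / 2 - (x 0 + x 3) / 2)
    + A 1 * ((w 1 + w 4) / 2 - (x 1 + x 4) / 2) + A 2 * ((w 2 + w 5) / 2 - (x 2 + x 5) / 2))
  ring

theorem stmt9 :
    ContDiff ℝ 1 covFn ∧ ConvexOn ℝ Set.univ covFn ∧
    ∀ x : Fin 6 → ℝ, ∀ m : Fin 6,
      fderiv ℝ covFn x (Pi.single m 1) =
        ang ⟨m.val % 3, Nat.mod_lt _ (by norm_num)⟩
          (fun i : Fin 3 => Real.exp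
            ((x ⟨i.val, by have := i.isLt; omega⟩ + x ⟨i.val + 3, by have := i.isLt; omega⟩) / 2)) := by
  obtain ⟨h1, h2, h3⟩ := gen_aux covFn (fun x => ∑ m : Fin 6,
      ang ⟨m.val % 3, Nat.mod_lt _ (by norm_num)⟩
          (fun i : Fin 3 => Real.exp
            ((x ⟨i.val, by have := i.isLt; omega⟩ + x ⟨i.val + 3, by have := i.isLt; omega⟩) / 2))
        • (ContinuousLinearMap.proj m : (Fin 6 → ℝ) →L[ℝ] ℝ))
    (by
      refine continuous_finsetSum _ fun m _ => Continuous.fun_smul ?_ continuous_const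
      exact (ang_continuous ⟨m.val % 3, Nat.mod_lt _ (by norm_num)⟩).comp
        (g := fun y : Fin 3 → ℝ => ang _ (fun m => Real.exp (y m)))
        (f := fun (x : Fin 6 → ℝ) (i : Fin 3) =>
          (x ⟨i.val, by have := i.isLt; omega⟩ + x ⟨i.val + 3, by have := i.isLt; omega⟩) / 2)
        (by fun_prop))
    (by
      intro y z
      have := cov_sub y z
      simpa using this)
  refine ⟨h2, h3, fun x m => ?_⟩
  rw [(h1 x).fderiv]
  simp [Pi.single_apply]
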